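/- Let u be a nonzero vector in E_tW and v a nonzero vector in E*_rW. Then {E*_{r+i}u}_{i=0}^d is a basis for W, and {E_{t+i}v}_{i=0}^d is a basis for W. -/

import Mathlib

open Matrix
open scoped Classical

noncomputable section

/-- The full setup: a `Q`-polynomial distance-regular graph `Γ = (X,R)` of diameter `D ≥ 3`,
with adjacency matrix `A`, primitive idempotents `E_i`, eigenvalues `θ_i`,
Krein parameters `q^h_{ij}`, a fixed base vertex `x`, dual primitive idempotents `E*_i`,
dual adjacency matrix `A*` and dual eigenvalues `θ*_i`. -/
structure TSetup (X : Type*) [Fintype X] [DecidableEq X] where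
  G : SimpleGraph X
  hGconn : G.Connected
  D : ℕ
  hD3 : 3 ≤ D
  hDiamLe : ∀ y z : X, G.dist y z ≤ D
  hDiamEq : ∃ y z : X, G.dist y z = D
  p : ℕ → ℕ → ℕ → ℕ
  hDRG : ∀ h i j : ℕ, h ≤ D → i ≤ D → j ≤ D → ∀ y z : X, G.dist y z = h →
    Nat.card {w : X // G.dist y w = i ∧ G.dist z w = j} = p h i j
  A : Matrix X X ℂ
  hA : ∀ y z : X, A y z = if G.Adj y z then 1 else 0
  E : ℕ → Matrix X X ℂ
  hEzero : ∀ i : ℕ, D < i → E i = 0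
  hEsum : ∑ i ∈ Finset.range (D + 1), E i = 1
  hEidem : ∀ i j : ℕ, i ≤ D → j ≤ D → E i * E j = if i = j then E i else 0
  hEsymm : ∀ i : ℕ, (E i)ᵀ = E i
  hEreal : ∀ i : ℕ, (E i).map (starRingEnd ℂ) = E i
  hE0 : E 0 = (Fintype.card X : ℂ)⁻¹ • Matrix.of (fun _ _ => (1 : ℂ))
  θ : ℕ → ℝ
  hθinj : ∀ i j : ℕ, i ≤ D → j ≤ D → θ i = θ j → i = j
  hAspec : A = ∑ i ∈ Finset.range (D + 1), (θ i : ℂ) • E i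
  q : ℕ → ℕ → ℕ → ℝ
  hKrein : ∀ i j : ℕ, i ≤ D → j ≤ D →
    Matrix.hadamard (E i) (E j) =
      (Fintype.card X : ℂ)⁻¹ • ∑ h ∈ Finset.range (D + 1), (q h i j : ℂ) • E h
  hQpoly0 : ∀ h i j : ℕ, h ≤ D → i ≤ D → j ≤ D →
    (i + j < h ∨ h + j < i ∨ h + i < j) → q h i j = 0
  hQpoly1 : ∀ h i j : ℕ, h ≤ D → i ≤ D → j ≤ D →
    (h = i + j ∨ i = h + j ∨ j = h + i) → q h i j ≠ 0
  x : X
  Estar : ℕ → Matrix X X ℂ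
  hEstarzero : ∀ i : ℕ, D < i → Estar i = 0
  hEstar : ∀ i : ℕ, i ≤ D → ∀ y z : X,
    Estar i y z = if y = z ∧ G.dist x y = i then 1 else 0
  Astar : Matrix X X ℂ
  hAstar : ∀ y z : X, Astar y z = if y = z then (Fintype.card X : ℂ) * E 1 x y else 0
  θstar : ℕ → ℝ
  hθstarinj : ∀ i j : ℕ, i ≤ D → j ≤ D → θstar i = θstar j → i = j
  hAstarspec : Astar = ∑ i ∈ Finset.range (D + 1), (θstar i : ℂ) • Estar i

variable {X : Type*} [Fintype X] [DecidableEq X]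

/-- The Terwilliger algebra `T = T(x)`, generated by `A` and `A*`. -/
def TSetup.T (S : TSetup X) : Subalgebra ℂ (Matrix X X ℂ) :=
  Algebra.adjoin ℂ {S.A, S.Astar}

/-- A thin irreducible `T`-module `W` with endpoint `r`, dual endpoint `t` and diameter `d`,
where `E*_i W ≠ 0` iff `r ≤ i ≤ r + d` and `E_i W ≠ 0` iff `t ≤ i ≤ t + d`. -/
structure TMod (S : TSetup X) where
  W : Submodule ℂ (X → ℂ)
  hWinv : ∀ B ∈ S.T, ∀ w ∈ W, B *ᵥ w ∈ W
  hWne : W ≠ ⊥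
  hWirr : ∀ U : Submodule ℂ (X → ℂ), U ≤ W →
    (∀ B ∈ S.T, ∀ w ∈ U, B *ᵥ w ∈ U) → U = ⊥ ∨ U = W
  hthin : ∀ i : ℕ, Module.finrank ℂ (W.map (S.Estar i).mulVecLin) ≤ 1
  r : ℕ
  t : ℕ
  d : ℕ
  hr : ∀ i : ℕ, W.map (S.Estar i).mulVecLin ≠ ⊥ ↔ r ≤ i ∧ i ≤ r + d
  ht : ∀ i : ℕ, W.map (S.E i).mulVecLin ≠ ⊥ ↔ t ≤ i ∧ i ≤ t + d

open Classical in
/-- The action of a matrix `B` on `W` (the restriction of `B` to `W`; defined to be `0`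
if `B` does not leave `W` invariant). -/
def actW (S : TSetup X) (M : TMod S) (B : Matrix X X ℂ) : M.W →ₗ[ℂ] M.W :=
  if h : ∀ w ∈ M.W, B.mulVecLin w ∈ M.W then B.mulVecLin.restrict h else 0

/-- `tr_W(B)`: the trace of the action of `B` on `W`. -/
def trW (S : TSetup X) (M : TMod S) (B : Matrix X X ℂ) : ℂ :=
  LinearMap.trace ℂ M.W (actW S M B)

/-- `a_i(W) = tr_W(E*_{r+i} A)`. -/
def aW (S : TSetup X) (M : TMod S) (i : ℕ) : ℂ :=
  trW S M (S.Estar (M.r + i) * S.A)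

/-- `x_i(W) = tr_W(E*_{r+i} A E*_{r+i-1} A)`, with `x_0(W) = 0`. -/
def xW (S : TSetup X) (M : TMod S) (i : ℕ) : ℂ :=
  if i = 0 then 0 else trW S M (S.Estar (M.r + i) * S.A * S.Estar (M.r + i - 1) * S.A)

/-- `a*_i(W) = tr_W(E_{t+i} A*)`. -/
def astarW (S : TSetup X) (M : TMod S) (i : ℕ) : ℂ :=
  trW S M (S.E (M.t + i) * S.Astar)

/-- `x*_i(W) = tr_W(E_{t+i} A* E_{t+i-1} A*)`, with `x*_0(W) = 0`. -/
def xstarW (S : TSetup X) (M : TMod S) (i : ℕ) : ℂ :=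
  if i = 0 then 0 else trW S M (S.E (M.t + i) * S.Astar * S.E (M.t + i - 1) * S.Astar)

/-- The polynomials `p_i`: `p_0 = 1`, `p_{-1} = 0`,
`λ p_i = p_{i+1} + a_i(W) p_i + x_i(W) p_{i-1}`. -/
def pW (S : TSetup X) (M : TMod S) : ℕ → Polynomial ℂ
  | 0 => 1
  | 1 => Polynomial.X - Polynomial.C (aW S M 0)
  | (n + 2) =>
      (Polynomial.X - Polynomial.C (aW S M (n + 1))) * pW S M (n + 1)
        - Polynomial.C (xW S M (n + 1)) * pW S M n

/-- The polynomials `p*_i`: `p*_0 = 1`, `p*_{-1} = 0`,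
`λ p*_i = p*_{i+1} + a*_i(W) p*_i + x*_i(W) p*_{i-1}`. -/
def pstarW (S : TSetup X) (M : TMod S) : ℕ → Polynomial ℂ
  | 0 => 1
  | 1 => Polynomial.X - Polynomial.C (astarW S M 0)
  | (n + 2) =>
      (Polynomial.X - Polynomial.C (astarW S M (n + 1))) * pstarW S M (n + 1)
        - Polynomial.C (xstarW S M (n + 1)) * pstarW S M n

/-- The Hermitian inner product `⟨u,v⟩ = Σ_y u_y conj(v_y)` on `ℂ^X`. -/
def herm (u v : X → ℂ) : ℂ := ∑ y, u y * (starRingEnd ℂ) (v y)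

/-- `ν(W)`, the multiplicative inverse of `m_0(W) = tr_W(E_t E*_r)`. -/
def nuW (S : TSetup X) (M : TMod S) : ℂ :=
  (trW S M (S.E M.t * S.Estar M.r))⁻¹

/-- `k_i(W) = ν(W) m*_i(W)` where `m*_i(W) = tr_W(E*_{r+i} E_t)`. -/
def kW (S : TSetup X) (M : TMod S) (i : ℕ) : ℂ :=
  nuW S M * trW S M (S.Estar (M.r + i) * S.E M.t)

/-- `k*_i(W) = ν(W) m_i(W)` where `m_i(W) = tr_W(E_{t+i} E*_r)`. -/
def kstarW (S : TSetup X) (M : TMod S) (i : ℕ) : ℂ :=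
  nuW S M * trW S M (S.E (M.t + i) * S.Estar M.r)

section Helpers

/-- A family of mutually orthogonal idempotents summing to the identity. -/
structure HRes {V : Type*} [AddCommGroup V] [Module ℂ V] (D : ℕ) (F : ℕ → V →ₗ[ℂ] V) : Prop where
  idem : ∀ i j v, F i (F j v) = if i = j then F i v else 0
  sum : ∀ v, ∑ i ∈ Finset.range (D + 1), F i v = v
  zero : ∀ i, D < i → F i = 0

variable {V : Type*} [AddCommGroup V] [Module ℂ V]

theorem h_nonzero {D : ℕ} {F : ℕ → V →ₗ[ℂ] V} (hF : HRes D F) (A : V →ₗ[ℂ] V)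
    (htri : ∀ i j v, j + 1 < i → F i (A (F j v)) = 0)
    (W : Submodule ℂ V) (hWA : ∀ w ∈ W, A w ∈ W) (hWF : ∀ i, ∀ w ∈ W, F i w ∈ W)
    (hirr : ∀ U : Submodule ℂ V, U ≤ W → (∀ w ∈ U, A w ∈ U) → (∀ i, ∀ w ∈ U, F i w ∈ U) →
      U = ⊥ ∨ U = W)
    (r d : ℕ) (hr : ∀ i, W.map (F i) ≠ ⊥ ↔ r ≤ i ∧ i ≤ r + d)
    (j : ℕ) (hrj : r ≤ j) (hjd : j < r + d) : ∃ w ∈ W, F (j + 1) (A (F j w)) ≠ 0 := by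
  by_contra hcon
  push Not at hcon
  let U : Submodule ℂ V :=
    { carrier := {w | w ∈ W ∧ ∀ k, j < k → F k w = 0}
      add_mem' := by
        rintro a b ⟨ha, ha'⟩ ⟨hb, hb'⟩
        exact ⟨W.add_mem ha hb, fun k hk => by rw [map_add, ha' k hk, hb' k hk, add_zero]⟩
      zero_mem' := ⟨W.zero_mem, fun k _ => map_zero _⟩
      smul_mem' := by
        rintro c a ⟨ha, ha'⟩
        exact ⟨W.smul_mem c ha, fun k hk => by rw [map_smul, ha' k hk, smul_zero]⟩ }
  have hUmem : ∀ w, w ∈ U ↔ (w ∈ W ∧ ∀ k, j < k → F k w = 0) := fun w => Iff.rfl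
  have h := hirr U (fun w hw => hw.1) ?_ ?_
  · rcases h with h | h
    · have h1 := (hr r).2 ⟨le_refl _, by omega⟩
      apply h1
      rw [eq_bot_iff, ← h]
      rintro _ ⟨w, hw, rfl⟩
      rw [hUmem]
      refine ⟨hWF _ _ hw, fun k hk => ?_⟩
      rw [hF.idem, if_neg (by omega)]
    · have h1 := (hr (j + 1)).2 ⟨by omega, by omega⟩
      apply h1
      rw [eq_bot_iff]
      rintro _ ⟨w, hw, rfl⟩
      have hw2 : w ∈ U := by rw [h]; exact hw
      simpa using hw2.2 (j + 1) (by omega)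
  · intro w hw
    rw [hUmem] at hw ⊢
    refine ⟨hWA _ hw.1, fun k hk => ?_⟩
    rw [← hF.sum w, map_sum, map_sum]
    refine Finset.sum_eq_zero fun i _ => ?_
    by_cases hij : j < i
    · rw [hw.2 i hij]; simp
    · by_cases hk2 : i + 1 < k
      · exact htri _ _ _ hk2
      · have h1 : i = j := by omega
        have h2 : k = j + 1 := by omega
        subst h1 h2
        exact hcon w hw.1
  · intro i w hw
    rw [hUmem] at hw ⊢
    refine ⟨hWF _ _ hw.1, fun k hk => ?_⟩
    rw [hF.idem]
    split_ifs
    · exact hw.2 k hk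
    · rfl

theorem h_line [FiniteDimensional ℂ V] (L U : Submodule ℂ V) (hL : Module.finrank ℂ L ≤ 1)
    (v : V) (hv : v ∈ L) (hv0 : v ≠ 0) (hvU : v ∈ U) : L ≤ U := by
  intro w hw
  obtain ⟨⟨g, hg⟩, hg2⟩ := (finrank_le_one_iff (K := ℂ) (V := L)).1 hL
  obtain ⟨a, ha⟩ := hg2 ⟨v, hv⟩
  obtain ⟨b, hb⟩ := hg2 ⟨w, hw⟩
  have ha' : a • g = v := congrArg Subtype.val ha
  have hb' : b • g = w := congrArg Subtype.val hb
  have ha0 : a ≠ 0 := by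
    rintro rfl
    exact hv0 (by rw [← ha', zero_smul])
  have : w = (b * a⁻¹) • v := by
    rw [← ha', ← hb', smul_smul, mul_assoc, inv_mul_cancel₀ ha0, mul_one]
  rw [this]
  exact U.smul_mem _ hvU

theorem h_cyclic [FiniteDimensional ℂ V] {D : ℕ} {F : ℕ → V →ₗ[ℂ] V} (hF : HRes D F)
    (A : V →ₗ[ℂ] V)
    (htri : ∀ i j v, j + 1 < i → F i (A (F j v)) = 0)
    (W : Submodule ℂ V) (hWA : ∀ w ∈ W, A w ∈ W) (hWF : ∀ i, ∀ w ∈ W, F i w ∈ W)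
    (hirr : ∀ U : Submodule ℂ V, U ≤ W → (∀ w ∈ U, A w ∈ U) → (∀ i, ∀ w ∈ U, F i w ∈ U) →
      U = ⊥ ∨ U = W)
    (hthin : ∀ i, Module.finrank ℂ (W.map (F i)) ≤ 1)
    (r d : ℕ) (hr : ∀ i, W.map (F i) ≠ ⊥ ↔ r ≤ i ∧ i ≤ r + d)
    (v : V) (hv : v ∈ W.map (F r)) (hv0 : v ≠ 0)
    (U : Submodule ℂ V) (hvU : v ∈ U) (hUA : ∀ w ∈ U, A w ∈ U) : W ≤ U := by
  have hz : ∀ i, ¬ (r ≤ i ∧ i ≤ r + d) → W.map (F i) ≤ U := by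
    intro i hi
    have : W.map (F i) = ⊥ := by
      by_contra h
      exact hi ((hr i).1 h)
    rw [this]
    exact bot_le
  have key : ∀ j, ∀ i ≤ j, W.map (F i) ≤ U := by
    intro j
    induction j with
    | zero =>
      intro i hi
      by_cases h : i = r
      · subst h; exact h_line _ _ (hthin _) v hv hv0 hvU
      · exact hz i (by omega)
    | succ j ih =>
      intro i hi
      by_cases hij : i ≤ j
      · exact ih i hij
      by_cases hir : i = r
      · subst hir; exact h_line _ _ (hthin _) v hv hv0 hvU
      by_cases hid : r ≤ i ∧ i ≤ r + d
      · have hi' : i = j + 1 := by omega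
        subst hi'
        obtain ⟨w, hw, hne⟩ := h_nonzero hF A htri W hWA hWF hirr r d hr j (by omega) (by omega)
        have hAF : A (F j w) ∈ W := hWA _ (hWF _ _ hw)
        refine h_line _ _ (hthin _) _ ⟨_, hAF, rfl⟩ hne ?_
        have hAU : A (F j w) ∈ U := hUA _ (ih j le_rfl ⟨w, hw, rfl⟩)
        have hD : j + 1 ∈ Finset.range (D + 1) := by
          rw [Finset.mem_range]
          by_contra hh
          apply hne
          rw [hF.zero (j + 1) (by omega)]
          rfl
        have hs := hF.sum (A (F j w))
        rw [← Finset.add_sum_erase _ _ hD] at hs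
        rw [eq_sub_of_add_eq hs]
        refine U.sub_mem hAU (U.sum_mem fun k hk => ?_)
        have hk' := Finset.ne_of_mem_erase hk
        by_cases hkj : k ≤ j
        · exact ih k hkj ⟨_, hAF, rfl⟩
        · rw [htri k j w (by omega)]
          exact U.zero_mem
      · exact hz i hid
  intro w hw
  rw [← hF.sum w]
  exact U.sum_mem fun i _ => key i i le_rfl ⟨w, hw, rfl⟩

theorem h_basis [FiniteDimensional ℂ V] {D : ℕ} {F H : ℕ → V →ₗ[ℂ] V} (hF : HRes D F)
    (hH : HRes D H) (A : V →ₗ[ℂ] V) (θ : ℕ → ℂ) (hA : ∀ i v, A (H i v) = θ i • H i v)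
    (htri : ∀ i j v, j + 1 < i → F i (A (F j v)) = 0)
    (W : Submodule ℂ V) (hWA : ∀ w ∈ W, A w ∈ W) (hWF : ∀ i, ∀ w ∈ W, F i w ∈ W)
    (hWH : ∀ i, ∀ w ∈ W, H i w ∈ W)
    (hirr : ∀ U : Submodule ℂ V, U ≤ W → (∀ w ∈ U, A w ∈ U) → (∀ i, ∀ w ∈ U, F i w ∈ U) →
      U = ⊥ ∨ U = W)
    (hthin : ∀ i, Module.finrank ℂ (W.map (F i)) ≤ 1)
    (r d t : ℕ) (hr : ∀ i, W.map (F i) ≠ ⊥ ↔ r ≤ i ∧ i ≤ r + d)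
    (ht : ∀ i, W.map (H i) ≠ ⊥ ↔ t ≤ i ∧ i ≤ t + d)
    (v : V) (hv : v ∈ W.map (F r)) (hv0 : v ≠ 0) :
    (LinearIndependent ℂ (fun i : Fin (d + 1) => H (t + i) v) ∧
      Submodule.span ℂ (Set.range fun i : Fin (d + 1) => H (t + i) v) = W) ∧
    ∀ i, Module.finrank ℂ (W.map (H i)) ≤ 1 := by
  have hvW : v ∈ W := by
    obtain ⟨w, hw, rfl⟩ := hv
    exact hWF _ _ hw
  set U := Submodule.span ℂ (Set.range fun i : Fin (d + 1) => H (t + i) v) with hU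
  have hHU : ∀ i, H i v ∈ U := by
    intro i
    by_cases hi : t ≤ i ∧ i ≤ t + d
    · apply Submodule.subset_span
      refine ⟨⟨i - t, by omega⟩, ?_⟩
      have : t + (i - t) = i := by omega
      simp only [this]
    · have h0 : W.map (H i) = ⊥ := by
        by_contra h
        exact hi ((ht i).1 h)
      have h1 : H i v ∈ W.map (H i) := ⟨v, hvW, rfl⟩
      rw [h0, Submodule.mem_bot] at h1
      rw [h1]
      exact U.zero_mem
  have hWU : W ≤ U := by
    refine h_cyclic hF A htri W hWA hWF hirr hthin r d hr v hv hv0 U ?_ ?_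
    · rw [← hH.sum v]
      exact U.sum_mem fun i _ => hHU i
    · intro w hw
      have : U ≤ U.comap A := by
        conv_lhs => rw [hU]
        rw [Submodule.span_le]
        rintro _ ⟨i, rfl⟩
        simp only [Submodule.comap_coe, Set.mem_preimage, SetLike.mem_coe, hA]
        exact U.smul_mem _ (hHU _)
      exact this hw
  have hUW : U = W := by
    refine le_antisymm ?_ hWU
    rw [hU, Submodule.span_le]
    rintro _ ⟨i, rfl⟩
    exact hWH _ _ hvW
  have hmap : ∀ i, W.map (H i) ≤ Submodule.span ℂ {H i v} := by
    intro i
    rw [← hUW, hU, Submodule.map_span, Submodule.span_le]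
    rintro _ ⟨_, ⟨k, rfl⟩, rfl⟩
    simp only [hH.idem]
    split_ifs
    · exact Submodule.subset_span rfl
    · exact Submodule.zero_mem _
  refine ⟨⟨?_, hUW⟩, ?_⟩
  · rw [Fintype.linearIndependent_iff]
    intro g hg i
    have h1 := congrArg (H (t + i)) hg
    rw [map_sum, map_zero, Finset.sum_eq_single i] at h1
    · rw [map_smul, hH.idem, if_pos rfl] at h1
      rcases smul_eq_zero.1 h1 with h | h
      · exact h
      · exfalso
        have h2 := hmap (t + i)
        rw [h, Submodule.span_zero_singleton] at h2
        exact (ht (t + i)).2 ⟨by omega, by omega⟩ (eq_bot_iff.2 h2)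
    · intro b _ hb
      have : (t + (i : ℕ)) ≠ t + b := by
        intro h
        apply hb
        ext
        omega
      rw [map_smul, hH.idem, if_neg this, smul_zero]
    · intro h
      exact absurd (Finset.mem_univ _) h
  · intro i
    refine (Submodule.finrank_mono (hmap i)).trans ?_
    exact (finrank_span_le_card _).trans (by simp)

end Helpers

section Concrete

theorem h_res {D : ℕ} {E : ℕ → Matrix X X ℂ} (hz : ∀ i, D < i → E i = 0)
    (hsum : ∑ i ∈ Finset.range (D + 1), E i = 1)
    (hid : ∀ i j, i ≤ D → j ≤ D → E i * E j = if i = j then E i else 0) :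
    HRes D (fun i => (E i).mulVecLin) where
  idem := by
    intro i j v
    simp only [Matrix.mulVecLin_apply, Matrix.mulVec_mulVec]
    by_cases hi : i ≤ D
    · by_cases hj : j ≤ D
      · rw [hid i j hi hj]
        split_ifs <;> simp
      · rw [hz j (by omega), if_neg (by omega)]
        simp
    · rw [hz i (by omega)]
      simp
  sum := by
    intro v
    simp only [Matrix.mulVecLin_apply]
    rw [← Matrix.sum_mulVec, hsum, Matrix.one_mulVec]
  zero := by
    intro i hi
    simp only [hz i hi]
    simp

theorem h_eig {D : ℕ} {E : ℕ → Matrix X X ℂ} (hz : ∀ i, D < i → E i = 0)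
    (hid : ∀ i j, i ≤ D → j ≤ D → E i * E j = if i = j then E i else 0)
    (θ : ℕ → ℝ) (B : Matrix X X ℂ)
    (hB : B = ∑ i ∈ Finset.range (D + 1), (θ i : ℂ) • E i) (k : ℕ) :
    B * E k = (θ k : ℂ) • E k := by
  by_cases hk : k ≤ D
  · rw [hB, Finset.sum_mul, Finset.sum_eq_single k]
    · rw [smul_mul_assoc, hid k k hk hk, if_pos rfl]
    · intro b hb hbk
      rw [Finset.mem_range] at hb
      rw [smul_mul_assoc, hid b k (by omega) hk, if_neg hbk, smul_zero]
    · intro h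
      exact absurd (Finset.mem_range.2 (by omega)) h
  · rw [hz k (by omega)]
    simp

theorem h_mem {D : ℕ} {E : ℕ → Matrix X X ℂ} (hz : ∀ i, D < i → E i = 0)
    (hsum : ∑ i ∈ Finset.range (D + 1), E i = 1)
    (hid : ∀ i j, i ≤ D → j ≤ D → E i * E j = if i = j then E i else 0)
    (θ : ℕ → ℝ) (hθ : ∀ i j : ℕ, i ≤ D → j ≤ D → θ i = θ j → i = j) (B : Matrix X X ℂ)
    (hB : B = ∑ i ∈ Finset.range (D + 1), (θ i : ℂ) • E i)
    (T : Subalgebra ℂ (Matrix X X ℂ)) (hT : B ∈ T) (k : ℕ) : E k ∈ T := by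
  by_cases hk : k ≤ D
  swap
  · rw [hz k (by omega)]
    exact T.zero_mem
  have hinj : Set.InjOn (fun i => (θ i : ℂ)) (Finset.range (D + 1) : Set ℕ) := by
    intro i hi j hj h
    simp only [Finset.coe_range, Set.mem_Iio] at hi hj
    exact hθ i j (by omega) (by omega) (Complex.ofReal_injective h)
  have hp : ∀ (p : Polynomial ℂ) (k : ℕ),
      Polynomial.aeval B p * E k = p.eval (θ k : ℂ) • E k := by
    intro p k
    induction p using Polynomial.induction_on' with
    | add p q hp hq => rw [map_add, add_mul, hp, hq, Polynomial.eval_add, add_smul]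
    | monomial n a =>
      rw [Polynomial.aeval_monomial, Polynomial.eval_monomial]
      have : B ^ n * E k = (θ k : ℂ) ^ n • E k := by
        induction n with
        | zero => simp
        | succ n ih =>
          rw [pow_succ, mul_assoc, h_eig hz hid θ B hB k, mul_smul_comm, ih, smul_smul, pow_succ,
            mul_comm]
      rw [mul_assoc, this, mul_smul_comm, mul_smul, ← Algebra.smul_def, smul_comm]
  have hkm : k ∈ Finset.range (D + 1) := Finset.mem_range.2 (by omega)
  have : E k = Polynomial.aeval B (Lagrange.basis (Finset.range (D + 1)) (fun i => (θ i : ℂ)) k) := by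
    rw [← mul_one (Polynomial.aeval B _), ← hsum, Finset.mul_sum, Finset.sum_eq_single k]
    · rw [hp, Lagrange.eval_basis_self hinj hkm, one_smul]
    · intro b hb hbk
      have h0 := Lagrange.eval_basis_of_ne (v := fun i => (θ i : ℂ)) hbk.symm hb
      rw [hp, h0, zero_smul]
    · intro h
      exact absurd hkm h
  rw [this]
  exact Algebra.adjoin_le (S := T) (by simpa using hT)
    (Polynomial.aeval_mem_adjoin_singleton ℂ B)

theorem h_Estar_sum (S : TSetup X) : ∑ i ∈ Finset.range (S.D + 1), S.Estar i = 1 := by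
  ext y z
  rw [Matrix.sum_apply, Finset.sum_eq_single (S.G.dist S.x y)]
  · rw [S.hEstar _ (S.hDiamLe _ _), Matrix.one_apply]
    simp
  · intro b hb hne
    rw [Finset.mem_range] at hb
    rw [S.hEstar b (by omega), if_neg]
    rintro ⟨_, h⟩
    exact hne h.symm
  · intro h
    exact absurd (Finset.mem_range.2 (Nat.lt_succ_of_le (S.hDiamLe _ _))) h

theorem h_Estar_diag (S : TSetup X) (i : ℕ) (hi : i ≤ S.D) :
    S.Estar i = Matrix.diagonal (fun y => if S.G.dist S.x y = i then 1 else 0) := by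
  ext y z
  rw [S.hEstar i hi, Matrix.diagonal_apply]
  by_cases h : y = z <;> simp [h]

theorem h_Estar_idem (S : TSetup X) (i j : ℕ) (hi : i ≤ S.D) (hj : j ≤ S.D) :
    S.Estar i * S.Estar j = if i = j then S.Estar i else 0 := by
  rw [h_Estar_diag S i hi, h_Estar_diag S j hj, Matrix.diagonal_mul_diagonal]
  split_ifs with h
  · subst h
    simp
  · rw [← Matrix.diagonal_zero]
    congr 1
    ext y
    by_cases h1 : S.G.dist S.x y = i
    · have : S.G.dist S.x y ≠ j := by omega
      simp [this]
    · simp [h1]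

theorem h_Estar_tri (S : TSetup X) (i j : ℕ) (hij : j + 1 < i) :
    S.Estar i * (S.A * S.Estar j) = 0 := by
  by_cases hi : i ≤ S.D
  swap
  · rw [S.hEstarzero i (by omega), zero_mul]
  rw [h_Estar_diag S i hi, h_Estar_diag S j (by omega)]
  ext y z
  rw [Matrix.diagonal_mul, Matrix.mul_diagonal, S.hA, Matrix.zero_apply]
  by_cases h1 : S.G.dist S.x y = i
  swap
  · simp [h1]
  by_cases h2 : S.G.dist S.x z = j
  swap
  · simp [h2]
  have : ¬ S.G.Adj y z := by
    intro h
    have h3 := S.hGconn.dist_triangle (u := S.x) (v := z) (w := y)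
    have h4 : S.G.dist z y = 1 := SimpleGraph.dist_eq_one_iff_adj.2 h.symm
    omega
  simp [this]

theorem h_E_herm (S : TSetup X) (i : ℕ) : (S.E i)ᴴ = S.E i := by
  have h := S.hEreal i
  rw [Matrix.conjTranspose, S.hEsymm]
  exact h

theorem h_Astar_diag (S : TSetup X) :
    S.Astar = Matrix.diagonal (fun y => (Fintype.card X : ℂ) * S.E 1 S.x y) := by
  ext y z
  rw [S.hAstar, Matrix.diagonal_apply]

theorem h_Astar_herm (S : TSetup X) : S.Astarᴴ = S.Astar := by
  rw [h_Astar_diag, Matrix.diagonal_conjTranspose]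
  congr 1
  ext y
  have h := congrFun (congrFun (S.hEreal 1) S.x) y
  simp only [Matrix.map_apply] at h
  simp [h]

open scoped ComplexOrder in
theorem h_E_tri (S : TSetup X) (i j : ℕ) (hij : j + 1 < i) :
    S.E i * (S.Astar * S.E j) = 0 := by
  by_cases hi : i ≤ S.D
  swap
  · rw [S.hEzero i (by omega), zero_mul]
  have hj : j ≤ S.D := by omega
  have h1D : 1 ≤ S.D := by have := S.hD3; omega
  rw [← Matrix.trace_mul_conjTranspose_self_eq_zero_iff]
  rw [Matrix.conjTranspose_mul, Matrix.conjTranspose_mul, h_E_herm, h_E_herm, h_Astar_herm]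
  have e1 : (S.E i * (S.Astar * S.E j) * (S.E j * S.Astar * S.E i)).trace
      = (S.E i * S.Astar * (S.E j * S.Astar)).trace := by
    have : S.E i * (S.Astar * S.E j) * (S.E j * S.Astar * S.E i)
        = (S.E i * S.Astar * (S.E j * S.E j) * S.Astar) * S.E i := by
      simp only [mul_assoc]
    rw [this, Matrix.trace_mul_comm, S.hEidem j j hj hj, if_pos rfl]
    have : S.E i * (S.E i * S.Astar * S.E j * S.Astar)
        = (S.E i * S.E i) * S.Astar * (S.E j * S.Astar) := by
      simp only [mul_assoc]
    rw [this, S.hEidem i i hi hi, if_pos rfl]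
  rw [e1]
  have hs : ∀ k y z, S.E k y z = S.E k z y := by
    intro k y z
    have h := congrFun (congrFun (S.hEsymm k) z) y
    simpa using h
  have e2 : (S.E i * S.Astar * (S.E j * S.Astar)).trace
      = (Fintype.card X : ℂ) ^ 2 *
        (S.E 1 * (Matrix.hadamard (S.E i) (S.E j)) * S.E 1) S.x S.x := by
    rw [h_Astar_diag, Matrix.trace]
    rw [Matrix.mul_apply, Finset.mul_sum]
    refine Finset.sum_congr rfl fun y _ => ?_
    rw [Matrix.diag_apply, Matrix.mul_apply, Matrix.mul_apply, Finset.sum_mul, Finset.mul_sum]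
    refine Finset.sum_congr rfl fun z _ => ?_
    rw [Matrix.mul_diagonal, Matrix.mul_diagonal, Matrix.hadamard_apply, hs 1 y S.x, hs i z y]
    ring
  rw [e2, S.hKrein i j hi hj]
  have e3 : S.E 1 * ((Fintype.card X : ℂ)⁻¹ •
      ∑ h ∈ Finset.range (S.D + 1), (S.q h i j : ℂ) • S.E h) * S.E 1 = 0 := by
    rw [mul_smul_comm, smul_mul_assoc, Finset.mul_sum, Finset.sum_mul, Finset.sum_eq_zero,
      smul_zero]
    intro h hh
    rw [Finset.mem_range] at hh
    rw [mul_smul_comm, smul_mul_assoc, S.hEidem 1 h h1D (by omega)]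
    split_ifs with h1
    · subst h1
      rw [S.hQpoly0 1 i j h1D hi hj (by omega)]
      simp
    · simp
  rw [e3]
  simp

/-- A subspace invariant under `A` and `A*` is invariant under `T`. -/
theorem h_T_inv (S : TSetup X) (U : Submodule ℂ (X → ℂ)) (h1 : ∀ w ∈ U, S.A *ᵥ w ∈ U)
    (h2 : ∀ w ∈ U, S.Astar *ᵥ w ∈ U) : ∀ B ∈ S.T, ∀ w ∈ U, B *ᵥ w ∈ U := by
  intro B hB
  induction hB using Algebra.adjoin_induction with
  | mem x hx =>
    rcases hx with rfl | hx
    · exact h1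
    · rw [Set.mem_singleton_iff] at hx
      subst hx
      exact h2
  | algebraMap c =>
    intro w hw
    rw [Algebra.algebraMap_eq_smul_one, Matrix.smul_mulVec, Matrix.one_mulVec]
    exact U.smul_mem _ hw
  | add a b _ _ ha hb =>
    intro w hw
    rw [Matrix.add_mulVec]
    exact U.add_mem (ha w hw) (hb w hw)
  | mul a b _ _ ha hb =>
    intro w hw
    rw [← Matrix.mulVec_mulVec]
    exact ha _ (hb w hw)

theorem h_spec_inv {D : ℕ} {E : ℕ → Matrix X X ℂ} (θ : ℕ → ℝ) (B : Matrix X X ℂ)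
    (hB : B = ∑ i ∈ Finset.range (D + 1), (θ i : ℂ) • E i) (U : Submodule ℂ (X → ℂ))
    (hU : ∀ i, ∀ w ∈ U, (E i).mulVecLin w ∈ U) : ∀ w ∈ U, B *ᵥ w ∈ U := by
  intro w hw
  rw [hB, Matrix.sum_mulVec]
  refine U.sum_mem fun i _ => ?_
  rw [Matrix.smul_mulVec]
  exact U.smul_mem _ (hU i w hw)

end Concrete

/-- For nonzero `u ∈ E_t W` and nonzero `v ∈ E*_r W`, `{E*_{r+i} u}_{i=0}^d` and
`{E_{t+i} v}_{i=0}^d` are bases for `W`. -/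
theorem stmt8 (S : TSetup X) (M : TMod S) (hd : 0 < M.d) :
    ∀ u ∈ M.W.map (S.E M.t).mulVecLin, u ≠ 0 →
    ∀ v ∈ M.W.map (S.Estar M.r).mulVecLin, v ≠ 0 →
      (LinearIndependent ℂ (fun i : Fin (M.d + 1) => S.Estar (M.r + i) *ᵥ u) ∧
        Submodule.span ℂ
          (Set.range fun i : Fin (M.d + 1) => S.Estar (M.r + i) *ᵥ u) = M.W) ∧
      (LinearIndependent ℂ (fun i : Fin (M.d + 1) => S.E (M.t + i) *ᵥ v) ∧
        Submodule.span ℂ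
          (Set.range fun i : Fin (M.d + 1) => S.E (M.t + i) *ᵥ v) = M.W) := by
  intro u hu hu0 v hv hv0
  have hAT : S.A ∈ S.T := Algebra.subset_adjoin (by simp)
  have hAsT : S.Astar ∈ S.T := Algebra.subset_adjoin (by simp)
  have rE := h_res S.hEzero S.hEsum S.hEidem
  have rEs := h_res S.hEstarzero (h_Estar_sum S) (h_Estar_idem S)
  have mE := h_mem S.hEzero S.hEsum S.hEidem S.θ S.hθinj S.A S.hAspec S.T hAT
  have mEs := h_mem S.hEstarzero (h_Estar_sum S) (h_Estar_idem S) S.θstar S.hθstarinj S.Astar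
    S.hAstarspec S.T hAsT
  have wE : ∀ i, ∀ w ∈ M.W, (S.E i).mulVecLin w ∈ M.W := fun i => M.hWinv _ (mE i)
  have wEs : ∀ i, ∀ w ∈ M.W, (S.Estar i).mulVecLin w ∈ M.W := fun i => M.hWinv _ (mEs i)
  have b1 := h_basis rEs rE S.A.mulVecLin (fun i => (S.θ i : ℂ))
    (by
      intro i w
      simp only [Matrix.mulVecLin_apply, Matrix.mulVec_mulVec]
      rw [h_eig S.hEzero S.hEidem S.θ S.A S.hAspec i, Matrix.smul_mulVec])
    (by
      intro i j w hij
      simp only [Matrix.mulVecLin_apply, Matrix.mulVec_mulVec]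
      rw [h_Estar_tri S i j hij, Matrix.zero_mulVec])
    M.W (M.hWinv _ hAT) wEs wE
    (fun U hUW h1 h2 => M.hWirr U hUW
      (h_T_inv S U h1 (h_spec_inv S.θstar S.Astar S.hAstarspec U h2)))
    M.hthin M.r M.d M.t M.hr M.ht v hv hv0
  have b2 := h_basis rE rEs S.Astar.mulVecLin (fun i => (S.θstar i : ℂ))
    (by
      intro i w
      simp only [Matrix.mulVecLin_apply, Matrix.mulVec_mulVec]
      rw [h_eig S.hEstarzero (h_Estar_idem S) S.θstar S.Astar S.hAstarspec i, Matrix.smul_mulVec])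
    (by
      intro i j w hij
      simp only [Matrix.mulVecLin_apply, Matrix.mulVec_mulVec]
      rw [h_E_tri S i j hij, Matrix.zero_mulVec])
    M.W (M.hWinv _ hAsT) wE wEs
    (fun U hUW h1 h2 => M.hWirr U hUW
      (h_T_inv S U (h_spec_inv S.θ S.A S.hAspec U h2) h1))
    b1.2 M.t M.d M.r M.ht M.hr u hu hu0
  exact ⟨b2.1, b1.1⟩
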